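/- There is a constant n₀ such that, for every n ≥ n₀ and every k ≤ n, there exists a bipartite graph H with maximum degree Δ(H) ≤ 100 and bipartition classes X and Y ∪ Z, with |X| = 3n, |Y| = 2n and |Z| = n + k, such that the following holds: for every Z' ⊆ Z with |Z'| = n, there exists a perfect matching in H between X and Y ∪ Z'. -/

import Mathlib

open SimpleGraph

open Finset in
/-- The fraction of equivalences `α ≃ β` that map `S` into `T`, by double counting. -/
theorem card_equiv_map_subset_mul_choose {α β : Type*} [Fintype α] [Fintype β] [DecidableEq α]
    [DecidableEq β] (S : Finset α) (T : Finset β) :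
    #{σ : α ≃ β | S.map σ.toEmbedding ⊆ T} * (Fintype.card α).choose #S =
      Fintype.card (α ≃ β) * (#T).choose #S := by
  have hconst : ∀ S' ∈ powersetCard #S (univ : Finset α),
      #{σ : α ≃ β | S'.map σ.toEmbedding ⊆ T} = #{σ : α ≃ β | S.map σ.toEmbedding ⊆ T} := by
    intro S' hS'
    have hcard : #S = #S' := (mem_powersetCard.1 hS').2.symm
    let e : {x // x ∈ S} ≃ {x // x ∈ S'} := Finset.equivOfCardEq hcard
    let τ : Equiv.Perm α := e.extendSubtype
    have hτ : S.map τ.toEmbedding = S' := by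
      refine eq_of_subset_of_card_le (fun y hy => ?_) (by simp [hcard])
      obtain ⟨x, hx, rfl⟩ := mem_map.1 hy
      exact e.extendSubtype_mem x hx
    refine card_bij' (fun σ _ => τ.trans σ) (fun σ _ => τ.symm.trans σ) ?_ ?_ ?_ ?_
    · intro σ hσ
      simp only [mem_filter, mem_univ, true_and] at hσ ⊢
      rw [← hτ, Finset.map_map] at hσ
      exact hσ
    · intro σ hσ
      simp only [mem_filter, mem_univ, true_and] at hσ ⊢
      rw [← hτ, Finset.map_map]
      convert hσ using 2
      ext x
      simp
    · intro σ _
      ext x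
      simp
    · intro σ _
      ext x
      simp
  have hinner : ∀ σ : α ≃ β,
      #{S' ∈ powersetCard #S (univ : Finset α) | S'.map σ.toEmbedding ⊆ T} =
        (#T).choose #S := by
    intro σ
    have : {S' ∈ powersetCard #S (univ : Finset α) | S'.map σ.toEmbedding ⊆ T} =
        powersetCard #S (T.map σ.symm.toEmbedding) := by
      ext S'
      simp only [mem_filter, mem_powersetCard, subset_univ, true_and]
      rw [and_comm]
      refine and_congr_left fun _ => ?_
      constructor
      · intro h x hx
        refine mem_map.2 ⟨σ x, h (mem_map_of_mem _ hx), by simp⟩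
      · intro h y hy
        obtain ⟨x, hx, rfl⟩ := mem_map.1 hy
        obtain ⟨z, hz, rfl⟩ := mem_map.1 (h hx)
        simpa using hz
    rw [this, card_powersetCard, card_map]
  have key := sum_card_bipartiteAbove_eq_sum_card_bipartiteBelow
    (s := powersetCard #S (univ : Finset α)) (t := (univ : Finset (α ≃ β)))
    (fun S' σ => S'.map σ.toEmbedding ⊆ T)
  simp only [bipartiteAbove, bipartiteBelow] at key
  rw [sum_congr rfl hconst, sum_congr rfl (fun σ _ => hinner σ)] at key
  simpa [mul_comm] using key

theorem Nat.choose_mul_pow_le_choose_mul_pow {b N : ℕ} (h : b ≤ N) (a : ℕ) :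
    b.choose a * N ^ a ≤ N.choose a * b ^ a := by
  have hdesc : b.descFactorial a * N ^ a ≤ N.descFactorial a * b ^ a := by
    induction a with
    | zero => simp
    | succ a ih =>
      rw [Nat.descFactorial_succ, Nat.descFactorial_succ, pow_succ, pow_succ]
      have h1 : (b - a) * N ≤ (N - a) * b := by
        rw [Nat.sub_mul, Nat.sub_mul, mul_comm b N]
        exact Nat.sub_le_sub_left (Nat.mul_le_mul_left a h) _
      calc (b - a) * b.descFactorial a * (N ^ a * N)
          = ((b - a) * N) * (b.descFactorial a * N ^ a) := by ring
        _ ≤ ((N - a) * b) * (N.descFactorial a * b ^ a) := Nat.mul_le_mul h1 ih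
        _ = _ := by ring
  rw [Nat.descFactorial_eq_factorial_mul_choose, Nat.descFactorial_eq_factorial_mul_choose,
    mul_assoc, mul_assoc] at hdesc
  exact Nat.le_of_mul_le_mul_left hdesc (Nat.factorial_pos a)

open Finset in
theorem card_equiv_map_subset_mul_pow_le {α β : Type*} [Fintype α] [Fintype β] [DecidableEq α]
    [DecidableEq β] (h : Fintype.card α = Fintype.card β) (S : Finset α) (T : Finset β) :
    #{σ : α ≃ β | S.map σ.toEmbedding ⊆ T} * Fintype.card β ^ #S ≤
      Fintype.card (α ≃ β) * #T ^ #S := by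
  have h1 := card_equiv_map_subset_mul_choose S T
  have h2 := Nat.choose_mul_pow_le_choose_mul_pow (card_le_univ T) #S
  have hpos : 0 < (Fintype.card α).choose #S := Nat.choose_pos (card_le_univ S)
  refine le_of_mul_le_mul_left (a := (Fintype.card α).choose #S) ?_ hpos
  calc (Fintype.card α).choose #S *
        (#{σ : α ≃ β | S.map σ.toEmbedding ⊆ T} * Fintype.card β ^ #S)
      = (#{σ : α ≃ β | S.map σ.toEmbedding ⊆ T} * (Fintype.card α).choose #S) *
          Fintype.card β ^ #S := by ring
    _ = Fintype.card (α ≃ β) * ((#T).choose #S * Fintype.card β ^ #S) := by rw [h1]; ring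
    _ ≤ Fintype.card (α ≃ β) * ((Fintype.card β).choose #S * #T ^ #S) :=
        Nat.mul_le_mul_left _ h2
    _ = _ := by rw [h]; ring

theorem choose_le_exp_mul_div_pow (m : ℕ) {s : ℕ} (hs : 0 < s) :
    (m.choose s : ℝ) ≤ (Real.exp 1 * m / s) ^ s := by
  have h1 : (m.choose s : ℝ) ≤ (m : ℝ) ^ s / s.factorial := Nat.choose_le_pow_div s m
  have h2 : (s : ℝ) ^ s / s.factorial ≤ Real.exp s :=
    Real.pow_div_factorial_le_exp (s : ℝ) (by positivity) s
  have hs' : (0 : ℝ) < s := by exact_mod_cast hs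
  have hf : (0 : ℝ) < s.factorial := by exact_mod_cast s.factorial_pos
  have h3 : Real.exp s = Real.exp 1 ^ s := by rw [← Real.exp_nat_mul]; simp
  rw [h3, div_le_iff₀ hf] at h2
  refine h1.trans ?_
  rw [div_pow, mul_pow, div_le_div_iff₀ hf (by positivity)]
  calc (m : ℝ) ^ s * (s : ℝ) ^ s ≤ (m : ℝ) ^ s * (Real.exp 1 ^ s * s.factorial) := by gcongr
    _ = _ := by ring

theorem choose_mul_choose_mul_pow_le {l r s : ℕ} (hs : 0 < s) (hlr : 2 * l ≤ 3 * r)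
    (hsr : 4 * s ≤ 3 * r) :
    (l.choose s * r.choose s : ℝ) * ((s : ℝ) / r) ^ (s * 24) ≤ (1 / 2) ^ s := by
  have hs' : (0 : ℝ) < s := by exact_mod_cast hs
  have hr : (0 : ℝ) < r := by
    have : 0 < r := by omega
    exact_mod_cast this
  have hl : (l : ℝ) ≤ 3 / 2 * r := by
    have : (2 * l : ℝ) ≤ 3 * r := by exact_mod_cast hlr
    linarith
  have hu : (s : ℝ) / r ≤ 3 / 4 := by
    rw [div_le_iff₀ hr]
    have : (4 * s : ℝ) ≤ 3 * r := by exact_mod_cast hsr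
    linarith
  have he : Real.exp 1 ≤ 3 := by linarith [Real.exp_one_lt_d9]
  calc (l.choose s * r.choose s : ℝ) * ((s : ℝ) / r) ^ (s * 24)
      ≤ ((Real.exp 1 * l / s) ^ s * (Real.exp 1 * r / s) ^ s) * ((s : ℝ) / r) ^ (s * 24) := by
        gcongr <;> exact choose_le_exp_mul_div_pow _ hs
    _ = ((Real.exp 1 * l / s) * (Real.exp 1 * r / s) * ((s : ℝ) / r) ^ 24) ^ s := by
        rw [mul_comm s 24, pow_mul, ← mul_pow, ← mul_pow]
    _ ≤ (1 / 2) ^ s := by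
        gcongr
        calc (Real.exp 1 * l / s) * (Real.exp 1 * r / s) * ((s : ℝ) / r) ^ 24
            ≤ (3 * (3 / 2 * r) / s) * (3 * r / s) * ((s : ℝ) / r) ^ 24 := by gcongr
          _ = 27 / 2 * ((s : ℝ) / r) ^ 22 := by field_simp; ring
          _ ≤ 27 / 2 * (3 / 4) ^ 22 := by gcongr
          _ ≤ 1 / 2 := by norm_num

open Finset in
theorem exists_equiv_forall_not_map_subset {L R : Type*} [Fintype L] [Fintype R] [DecidableEq L]
    [DecidableEq R] {E : ℕ} (hE : 0 < E)
    (hcard : Fintype.card L * 24 = Fintype.card R * E)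
    (hLR : 2 * Fintype.card L ≤ 3 * Fintype.card R) :
    ∃ σ : L × Fin 24 ≃ R × Fin E, ∀ (A : Finset L) (B : Finset R), A.Nonempty →
      4 * #A ≤ 3 * Fintype.card R → #B = #A →
      ¬ (A ×ˢ (univ : Finset (Fin 24))).map σ.toEmbedding ⊆ B ×ˢ univ := by
  by_contra! hbad
  have hcard' : Fintype.card (L × Fin 24) = Fintype.card (R × Fin E) := by simpa using hcard
  set Ω := L × Fin 24 ≃ R × Fin E
  have hΩ : 0 < Fintype.card Ω := Fintype.card_pos_iff.2 (Fintype.card_eq.1 hcard')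
  set l := Fintype.card L
  set r := Fintype.card R
  set ev : Finset L → Finset R → Finset Ω := fun A B =>
    {σ | (A ×ˢ (univ : Finset (Fin 24))).map σ.toEmbedding ⊆ B ×ˢ univ}
  have hcover : (univ : Finset Ω) ⊆ (range (3 * r / 4)).biUnion fun i =>
      (powersetCard (i + 1) univ).biUnion fun A => (powersetCard (i + 1) univ).biUnion fun B =>
        ev A B := by
    intro σ _
    obtain ⟨A, B, hA, hA4, hBA, hsub⟩ := hbad σ
    have := hA.card_pos
    simp only [mem_biUnion, mem_range, mem_powersetCard, subset_univ, true_and]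
    exact ⟨#A - 1, by omega, A, by omega, B, by omega, by simpa [ev] using hsub⟩
  have hprob : ∀ i ∈ range (3 * r / 4), ∀ A ∈ powersetCard (i + 1) (univ : Finset L),
      ∀ B ∈ powersetCard (i + 1) (univ : Finset R),
      (#(ev A B) : ℝ) ≤ Fintype.card Ω * (((i + 1 : ℕ) : ℝ) / r) ^ ((i + 1) * 24) := by
    intro i hi A hA B hB
    have hi := mem_range.1 hi
    have hr : (0 : ℝ) < r := by
      have : 0 < r := by omega
      exact_mod_cast this
    have hE' : (0 : ℝ) < E := by exact_mod_cast hE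
    have h := card_equiv_map_subset_mul_pow_le hcard' (A ×ˢ (univ : Finset (Fin 24)))
      (B ×ˢ (univ : Finset (Fin E)))
    simp only [card_product, (mem_powersetCard.1 hA).2, (mem_powersetCard.1 hB).2, card_univ,
      Fintype.card_fin, Fintype.card_prod] at h
    have h' : (#(ev A B) : ℝ) * ((r : ℝ) * E) ^ ((i + 1) * 24) ≤
        Fintype.card Ω * (((i + 1 : ℕ) : ℝ) * E) ^ ((i + 1) * 24) := by exact_mod_cast h
    rw [← le_div_iff₀ (by positivity), mul_div_assoc, ← div_pow,
      mul_div_mul_right _ _ hE'.ne'] at h'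
    exact h'
  have hsum : ∀ m : ℕ, ∑ i ∈ range m, (1 / 2 : ℝ) ^ (i + 1) = 1 - (1 / 2) ^ m := by
    intro m
    induction m with
    | zero => simp
    | succ m ih => rw [sum_range_succ, ih]; ring
  have hle : (Fintype.card Ω : ℝ) ≤ Fintype.card Ω * (1 - (1 / 2) ^ (3 * r / 4)) := by
    calc (Fintype.card Ω : ℝ)
        ≤ ∑ i ∈ range (3 * r / 4), ∑ A ∈ powersetCard (i + 1) (univ : Finset L),
            ∑ B ∈ powersetCard (i + 1) (univ : Finset R), (#(ev A B) : ℝ) := by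
          have h1 := (card_le_card hcover).trans <| card_biUnion_le.trans <|
            sum_le_sum fun i _ => card_biUnion_le.trans <| sum_le_sum fun A _ => card_biUnion_le
          exact_mod_cast h1
      _ ≤ ∑ i ∈ range (3 * r / 4), ∑ A ∈ powersetCard (i + 1) (univ : Finset L),
            ∑ B ∈ powersetCard (i + 1) (univ : Finset R),
            Fintype.card Ω * (((i + 1 : ℕ) : ℝ) / r) ^ ((i + 1) * 24) :=
          sum_le_sum fun i hi => sum_le_sum fun A hA => sum_le_sum fun B hB => hprob i hi A hA B hB
      _ = ∑ i ∈ range (3 * r / 4), Fintype.card Ω * ((l.choose (i + 1) * r.choose (i + 1) : ℝ) *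
            (((i + 1 : ℕ) : ℝ) / r) ^ ((i + 1) * 24)) := by
          refine sum_congr rfl fun i _ => ?_
          simp only [sum_const, card_powersetCard, card_univ, nsmul_eq_mul]
          ring
      _ ≤ ∑ i ∈ range (3 * r / 4), Fintype.card Ω * (1 / 2 : ℝ) ^ (i + 1) := by
          refine sum_le_sum fun i hi => ?_
          have hi := mem_range.1 hi
          gcongr
          exact choose_mul_choose_mul_pow_le (by omega) hLR (by omega)
      _ = _ := by rw [← mul_sum, hsum]
  have hΩ' : (0 : ℝ) < Fintype.card Ω := by exact_mod_cast hΩ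
  have : (0 : ℝ) < Fintype.card Ω * (1 / 2) ^ (3 * r / 4) := by positivity
  linarith

open Finset in
/-- Existence of bipartite expanders with bounded degrees. -/
theorem exists_bipartite_expander {L R : Type*} [Fintype L] [Fintype R] {E : ℕ} (hE : 0 < E)
    (hcard : Fintype.card L * 24 = Fintype.card R * E)
    (hLR : 2 * Fintype.card L ≤ 3 * Fintype.card R) :
    ∃ r : L → R → Prop, (∀ x, {y | r x y}.ncard ≤ 24) ∧ (∀ y, {x | r x y}.ncard ≤ E) ∧
      ∀ A : Finset L, 4 * #A ≤ 3 * Fintype.card R →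
        ∀ B : Finset R, (∀ x ∈ A, ∀ y, r x y → y ∈ B) → #A ≤ #B := by
  classical
  obtain ⟨σ, hσ⟩ := exists_equiv_forall_not_map_subset hE hcard hLR
  refine ⟨fun x y => ∃ i, (σ (x, i)).1 = y, fun x => ?_, fun y => ?_, fun A hA B hB => ?_⟩
  · have : {y | ∃ i, (σ (x, i)).1 = y} = Set.range fun i => (σ (x, i)).1 := rfl
    rw [this, ← Set.image_univ]
    exact (Set.ncard_image_le Set.finite_univ).trans (by simp [Set.ncard_univ])
  · have : {x | ∃ i, (σ (x, i)).1 = y} ⊆ Set.range fun j => (σ.symm (y, j)).1 := by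
      rintro x ⟨i, rfl⟩
      exact ⟨(σ (x, i)).2, by simp⟩
    refine (Set.ncard_le_ncard this (Set.finite_range _)).trans ?_
    rw [← Set.image_univ]
    exact (Set.ncard_image_le Set.finite_univ).trans (by simp [Set.ncard_univ])
  · by_contra! hlt
    obtain ⟨B', hBB', -, hB'⟩ := exists_subsuperset_card_eq (subset_univ B) hlt.le
      (by rw [card_univ]; omega)
    refine hσ A B' (card_pos.1 (by omega)) hA hB' fun w hw => ?_
    obtain ⟨⟨x, i⟩, hx, rfl⟩ := mem_map.1 hw
    exact mem_product.2 ⟨hBB' (hB x (mem_product.1 hx).1 _ ⟨i, rfl⟩), mem_univ _⟩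

open Finset in
/-- Hall's theorem for balanced classes, with the condition checked for small sets on both
sides. -/
theorem exists_matching_of_expansion {X W : Type*} [Fintype X] [DecidableEq W]
    (r : X → W → Prop) (V : Finset W) (hV : #V = Fintype.card X) (m : ℕ)
    (hX : ∀ A : Finset X, #A ≤ m → ∀ B : Finset W, (∀ x ∈ A, ∀ w ∈ V, r x w → w ∈ B) → #A ≤ #B)
    (hW : ∀ B ⊆ V, #B + m ≤ Fintype.card X →
      ∀ A : Finset X, (∀ w ∈ B, ∀ x, r x w → x ∈ A) → #B ≤ #A) :
    ∃ f : X → W, Function.Injective f ∧ (∀ x, r x (f x)) ∧ (∀ x, f x ∈ V) ∧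
      ∀ w ∈ V, ∃ x, f x = w := by
  classical
  have hall : ∀ A : Finset X, #A ≤ #(A.biUnion fun x => {w ∈ V | r x w}) := by
    intro A
    by_cases hA : #A ≤ m
    · exact hX A hA _ fun x hx w hw hr => mem_biUnion.2 ⟨x, hx, mem_filter.2 ⟨hw, hr⟩⟩
    by_contra! hlt
    set N := A.biUnion fun x => {w ∈ V | r x w}
    have hNV : N ⊆ V := biUnion_subset.2 fun x _ => filter_subset _ _
    have hVN : #(V \ N) = Fintype.card X - #N := by rw [card_sdiff_of_subset hNV, hV]
    have hAle := card_le_univ A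
    obtain ⟨B, hBs, hB⟩ := exists_subset_card_eq
      (s := V \ N) (n := Fintype.card X - #A + 1) (by omega)
    have := hW B (hBs.trans sdiff_subset) (by omega) Aᶜ fun w hw x hr => by
      rw [mem_compl]
      intro hx
      have hw' := mem_sdiff.1 (hBs hw)
      exact hw'.2 (mem_biUnion.2 ⟨x, hx, mem_filter.2 ⟨hw'.1, hr⟩⟩)
    rw [card_compl] at this
    omega
  obtain ⟨f, hf, hfm⟩ := (all_card_le_biUnion_card_iff_exists_injective _).1 hall
  have hfV : ∀ x, f x ∈ V := fun x => (mem_filter.1 (hfm x)).1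
  refine ⟨f, hf, fun x => (mem_filter.1 (hfm x)).2, hfV, fun w hw => ?_⟩
  have himg : univ.image f = V :=
    eq_of_subset_of_card_le (image_subset_iff.2 fun x _ => hfV x)
      (by rw [card_image_of_injective _ hf, card_univ, hV])
  rw [← himg] at hw
  simpa using hw

/-- Lemma 3.6 (Montgomery's template): there is `n₀` such that for every `n ≥ n₀`
and `k ≤ n` there is a bipartite graph `H` with parts `X` (of size `3n`) and
`Y ∪ Z` (with `|Y| = 2n`, `|Z| = n + k`), with `Δ(H) ≤ 100`, such that for every
`Z' ⊆ Z` of size `n` there is a perfect matching in `H` between `X` and `Y ∪ Z'`.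
Here `X` is encoded as `Fin (3n)`, `Y` as `Fin (2n)` and `Z` as `Fin (n+k)`. -/
theorem template_exists :
    ∃ n₀ : ℕ, ∀ n : ℕ, n₀ ≤ n → ∀ k : ℕ, k ≤ n →
      ∃ H : SimpleGraph (Fin (3 * n) ⊕ (Fin (2 * n) ⊕ Fin (n + k))),
        -- `H` is bipartite with classes `X = Fin (3n)` and `Y ∪ Z`
        (∀ a b : Fin (3 * n), ¬ H.Adj (Sum.inl a) (Sum.inl b)) ∧
        (∀ a b : Fin (2 * n) ⊕ Fin (n + k), ¬ H.Adj (Sum.inr a) (Sum.inr b)) ∧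
        -- `Δ(H) ≤ 100`
        (∀ v, (H.neighborSet v).ncard ≤ 100) ∧
        -- robust matching property
        (∀ Z' : Finset (Fin (n + k)), Z'.card = n →
          ∃ f : Fin (3 * n) → Fin (2 * n) ⊕ Fin (n + k),
            Function.Injective f ∧
            (∀ x, H.Adj (Sum.inl x) (Sum.inr (f x))) ∧
            (∀ x z, f x = Sum.inr z → z ∈ Z') ∧
            (∀ y : Fin (2 * n), ∃ x, f x = Sum.inl y) ∧
            (∀ z ∈ Z', ∃ x, f x = Sum.inr z)) := by
  refine ⟨1, fun n hn k hk => ?_⟩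
  obtain ⟨r, hr₁, hr₂, hr⟩ := exists_bipartite_expander (L := Fin (3 * n)) (R := Fin (2 * n))
    (E := 36) (by norm_num) (by simp; ring) (by simp; omega)
  obtain ⟨q, hq₁, hq₂, hq⟩ := exists_bipartite_expander (L := Fin (2 * n) ⊕ Fin (2 * n))
    (R := Fin (3 * n)) (E := 32) (by norm_num) (by simp; ring) (by simp; omega)
  have hkn : n + k ≤ 2 * n := by omega
  let ι : Fin (2 * n) ⊕ Fin (n + k) ↪ Fin (2 * n) ⊕ Fin (2 * n) :=
    ⟨Sum.map id (Fin.castLE hkn),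
      Sum.map_injective.2 ⟨Function.injective_id, Fin.castLE_injective hkn⟩⟩
  let adj : Fin (3 * n) → Fin (2 * n) ⊕ Fin (n + k) → Prop := fun x w =>
    (∃ y, w = Sum.inl y ∧ r x y) ∨ q (ι w) x
  let H : SimpleGraph (Fin (3 * n) ⊕ (Fin (2 * n) ⊕ Fin (n + k))) :=
    { Adj := fun u v => (∃ x w, u = Sum.inl x ∧ v = Sum.inr w ∧ adj x w) ∨
        ∃ x w, v = Sum.inl x ∧ u = Sum.inr w ∧ adj x w
      symm := ⟨fun u v h => h.symm⟩
      loopless := ⟨by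
        rintro u (⟨x, w, rfl, h, -⟩ | ⟨x, w, rfl, h, -⟩) <;> cases h⟩ }
  have hadj : ∀ x w, adj x w → H.Adj (Sum.inl x) (Sum.inr w) := fun x w h =>
    Or.inl ⟨x, w, rfl, rfl, h⟩
  refine ⟨H, ?_, ?_, ?_, ?_⟩
  · rintro a b (⟨x, w, -, h, -⟩ | ⟨x, w, -, h, -⟩) <;> cases h
  · rintro a b (⟨x, w, h, -, -⟩ | ⟨x, w, h, -, -⟩) <;> cases h
  · rintro (x | w)
    · have hsub : H.neighborSet (Sum.inl x) ⊆
          (fun y => Sum.inr (Sum.inl y)) '' {y | r x y} ∪ Sum.inr '' (ι ⁻¹' {w | q w x}) := by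
        rintro v (⟨x', w, hx, rfl, ⟨y, rfl, h⟩ | h⟩ | ⟨x', w, -, h, -⟩)
        · cases hx
          exact Or.inl ⟨y, h, rfl⟩
        · cases hx
          exact Or.inr ⟨w, h, rfl⟩
        · cases h
      have h1 := Set.ncard_image_le (f := fun y => (Sum.inr (Sum.inl y) :
        Fin (3 * n) ⊕ (Fin (2 * n) ⊕ Fin (n + k)))) (Set.toFinite {y | r x y})
      have h2 := Set.ncard_image_le (f := (Sum.inr : _ →
        Fin (3 * n) ⊕ (Fin (2 * n) ⊕ Fin (n + k)))) (Set.toFinite (ι ⁻¹' {w | q w x}))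
      have h3 : (ι ⁻¹' {w | q w x}).ncard ≤ {w | q w x}.ncard :=
        Set.ncard_le_ncard_of_injOn ι (fun w hw => hw) ι.injective.injOn (Set.toFinite _)
      have h4 := (Set.ncard_le_ncard hsub (Set.toFinite _)).trans (Set.ncard_union_le _ _)
      have h5 := hr₁ x
      have h6 := hq₂ x
      omega
    · have hsub : H.neighborSet (Sum.inr w) ⊆
          Sum.inl '' {x | ∃ y, w = Sum.inl y ∧ r x y} ∪ Sum.inl '' {x | q (ι w) x} := by
        rintro v (⟨x, w', h, -, -⟩ | ⟨x, w', rfl, hw, h | h⟩)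
        · cases h
        · cases hw
          exact Or.inl ⟨x, h, rfl⟩
        · cases hw
          exact Or.inr ⟨x, h, rfl⟩
      have h1 := Set.ncard_image_le (f := (Sum.inl : _ →
        Fin (3 * n) ⊕ (Fin (2 * n) ⊕ Fin (n + k))))
        (Set.toFinite {x | ∃ y, w = Sum.inl y ∧ r x y})
      have h2 := Set.ncard_image_le (f := (Sum.inl : _ →
        Fin (3 * n) ⊕ (Fin (2 * n) ⊕ Fin (n + k)))) (Set.toFinite {x | q (ι w) x})
      have h3 : {x | ∃ y, w = Sum.inl y ∧ r x y}.ncard ≤ 36 := by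
        rcases w with y | z
        · simpa using hr₂ y
        · simp
      have h4 := (Set.ncard_le_ncard hsub (Set.toFinite _)).trans (Set.ncard_union_le _ _)
      have h5 := hq₁ (ι w)
      omega
  · intro Z' hZ'
    have hV : (Finset.univ.disjSum Z' : Finset (Fin (2 * n) ⊕ Fin (n + k))).card =
        Fintype.card (Fin (3 * n)) := by
      rw [Finset.card_disjSum, hZ', Finset.card_univ, Fintype.card_fin, Fintype.card_fin]
      ring
    obtain ⟨f, hf, hfadj, hfV, hfsurj⟩ := exists_matching_of_expansion adj _ hV (3 * n / 2)
      (by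
        intro A hA B hB
        have hA' : 4 * A.card ≤ 3 * Fintype.card (Fin (2 * n)) := by
          rw [Fintype.card_fin]
          omega
        refine (hr A hA' B.toLeft fun x hx y h => ?_).trans B.card_toLeft_le
        exact Finset.mem_toLeft.2 (hB x hx _ (by simp) (Or.inl ⟨y, rfl, h⟩)))
      (by
        intro B _ hB A hA
        have hB' : 4 * (B.map ι).card ≤ 3 * Fintype.card (Fin (3 * n)) := by
          rw [Fintype.card_fin] at hB ⊢
          rw [Finset.card_map]
          omega
        have h := hq (B.map ι) hB' A fun w hw x h => by
          obtain ⟨w', hw', rfl⟩ := Finset.mem_map.1 hw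
          exact hA w' hw' x (Or.inr h)
        rwa [Finset.card_map] at h)
    refine ⟨f, hf, fun x => hadj _ _ (hfadj x), fun x z h => ?_, fun y => ?_, fun z hz => ?_⟩
    · simpa [h] using hfV x
    · exact hfsurj _ (by simp)
    · exact hfsurj _ (by simpa using hz)
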